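/- arXiv:1510.00974 — 2 statements merged into one kernel-verified Lean document; each statement's English description precedes it below -/
import Mathlib

section
/- Let A be a C*-algebra with the ideal property and let φ be a lower semicontinuous trace on A. Let I be the closed two-sided ideal of A generated by the set of projections e ∈ A with φ(e) < ∞. Then φ(x) = +∞ for every positive x ∈ A that does not belong to I. -/
open scoped ENNReal NNReal

/-- A `[0,∞]`-valued trace on a C*-algebra: positively homogeneous and additive on the
positive cone, and satisfying `φ (x* x) = φ (x x*)` for all `x`. -/
structure IsTrace {A : Type*} [NonUnitalCStarAlgebra A] [PartialOrder A] [StarOrderedRing A]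
    (φ : A → ℝ≥0∞) : Prop where
  smul : ∀ x : A, 0 ≤ x → ∀ α : ℝ≥0, φ ((α : ℝ) • x) = (α : ℝ≥0∞) * φ x
  add : ∀ x y : A, 0 ≤ x → 0 ≤ y → φ (x + y) = φ x + φ y
  tracial : ∀ x : A, φ (star x * x) = φ (x * star x)

/-- A trace is lower semicontinuous if for each finite `α`, the set of positive elements
with `φ x ≤ α` is closed. -/
def IsLSC {A : Type*} [NonUnitalCStarAlgebra A] [PartialOrder A] [StarOrderedRing A]
    (φ : A → ℝ≥0∞) : Prop :=
  ∀ α : ℝ≥0, IsClosed {x : A | 0 ≤ x ∧ φ x ≤ (α : ℝ≥0∞)}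

/-- A C*-algebra has the ideal property if every closed two-sided ideal is generated, as a
closed two-sided ideal, by the projections it contains. -/
def IdealProperty (A : Type*) [NonUnitalCStarAlgebra A] [PartialOrder A]
    [StarOrderedRing A] : Prop :=
  ∀ I : TwoSidedIdeal A, IsClosed (I : Set A) →
    (I : Set A) =
      closure (TwoSidedIdeal.span {p : A | p ∈ I ∧ IsSelfAdjoint p ∧ p * p = p} : Set A)

/-!
The elements `y` with `φ (y* y) < ∞` form a two-sided ideal `N`, which contains every `x ≥ 0` with
`φ x < ∞` because `x = b* b` with `b ∈ N`. An idempotent in the closure of an ideal already lies in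
the ideal, so the ideal property, applied to the closure of `N`, puts `x` in the closed ideal
generated by the projections `e` of `N`; for these `φ e = φ (e* e) < ∞`.
-/

section ClosureOfIdeal

/-- The closure of a two-sided ideal of a topological ring, as a two-sided ideal; the two-sided
counterpart of `Ideal.closure`. -/
def twoSidedIdealClosure {R : Type*} [NonUnitalNonAssocRing R] [TopologicalSpace R]
    [IsTopologicalRing R] (I : TwoSidedIdeal R) : TwoSidedIdeal R :=
  .mk' (closure (I : Set R)) (subset_closure I.zero_mem)
    (fun hx hy => map_mem_closure₂ continuous_add hx hy fun _ ha _ hb => I.add_mem ha hb)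
    (fun hx => map_mem_closure continuous_neg hx fun _ => I.neg_mem)
    (fun {a _} hy => map_mem_closure (continuous_const_mul a) hy fun _ => I.mul_mem_left a _)
    (fun {_ b} hx => map_mem_closure (f := (· * b)) (continuous_mul_const b) hx
      fun _ => I.mul_mem_right _ b)

theorem coe_twoSidedIdealClosure {R : Type*} [NonUnitalNonAssocRing R] [TopologicalSpace R]
    [IsTopologicalRing R] (I : TwoSidedIdeal R) :
    (twoSidedIdealClosure I : Set R) = closure I :=
  TwoSidedIdeal.coe_mk' _ _ _ _ _ _

variable {R : Type*} [NonUnitalNormedRing R] [CompleteSpace R]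

theorem exists_add_mul_eq_self_of_norm_lt_one {a : R} (ha : ‖a‖ < 1) (c : R) :
    ∃ b, c + a * b = b := by
  have hcontr : ContractingWith ‖a‖₊ fun b => c + a * b := by
    refine ⟨ha, LipschitzWith.of_dist_le_mul fun b b' => ?_⟩
    rw [dist_add_left, dist_eq_norm, dist_eq_norm, ← mul_sub]
    exact norm_mul_le _ _
  exact ⟨_, hcontr.fixedPoint_isFixedPt⟩

theorem mem_of_isIdempotentElem_of_mem_closure {I : TwoSidedIdeal R} {e : R}
    (he : IsIdempotentElem e) (heI : e ∈ closure (I : Set R)) : e ∈ I := by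
  have hopen : IsOpen {y | ‖e * (e - y)‖ < 1} := isOpen_lt (by fun_prop) continuous_const
  obtain ⟨y, hy, hyI⟩ := mem_closure_iff.1 heI _ hopen (by simp)
  obtain ⟨a, ha⟩ : ∃ a, a = e * (e - y) := ⟨_, rfl⟩
  obtain ⟨b, hb⟩ : ∃ b, a + a * b = b :=
    exists_add_mul_eq_self_of_norm_lt_one (ha ▸ hy) a
  -- In the unitization, `1 + b` inverts `1 - a`, so `e * y = e * (1 - a)` gives
  -- `e = e * y * (1 + b)`.
  have hey : e * y = e - a := by rw [ha, mul_sub, he.eq, sub_sub_cancel]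
  have hea : e * a = a := by rw [ha, ← mul_assoc, he.eq]
  have heb : e * b = b := by rw [← hb, mul_add, ← mul_assoc, hea]
  have hfactor : e = e * y + e * y * b := by
    rw [hey, sub_mul, heb, sub_eq_of_eq_add hb.symm, sub_add_cancel]
  rw [hfactor]
  exact I.add_mem (I.mul_mem_left _ _ hyI) (I.mul_mem_right _ _ (I.mul_mem_left _ _ hyI))

end ClosureOfIdeal

theorem star_add_mul_add_le {R : Type*} [NonUnitalRing R] [PartialOrder R] [StarRing R]
    [StarOrderedRing R] (y z : R) :
    star (y + z) * (y + z) ≤ 2 • (star y * y + star z * z) := by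
  have parallelogram : 2 • (star y * y + star z * z) =
      star (y + z) * (y + z) + star (y - z) * (y - z) := by
    simp only [star_add, star_sub]
    noncomm_ring
  exact parallelogram ▸ le_add_of_nonneg_right (star_mul_self_nonneg _)

section CStarAlgebra

variable {A : Type*} [NonUnitalCStarAlgebra A] [PartialOrder A] [StarOrderedRing A]

theorem star_mul_mul_mul_le_norm_sq_smul (a y : A) :
    star (a * y) * (a * y) ≤ ‖a‖ ^ 2 • (star y * y) := by
  have h := CStarAlgebra.star_left_conjugate_le_norm_smul (a := y) (b := star a * a)
  rwa [CStarRing.norm_star_mul_self, ← sq, ← mul_assoc, ← star_mul, mul_assoc] at h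

theorem IdealProperty.subset_closure_span_projections (hA : IdealProperty A)
    (I : TwoSidedIdeal A) :
    (I : Set A) ⊆
      closure (TwoSidedIdeal.span {p : A | p ∈ I ∧ IsSelfAdjoint p ∧ p * p = p} : Set A) := by
  have hclosure := coe_twoSidedIdealClosure I
  calc (I : Set A) ⊆ twoSidedIdealClosure I := hclosure ▸ subset_closure
    _ = _ := hA _ (hclosure ▸ isClosed_closure)
    _ ⊆ _ := by
      refine closure_mono (TwoSidedIdeal.span_mono ?_)
      rintro p ⟨hp, hsa, hidem⟩
      rw [← SetLike.mem_coe, hclosure] at hp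
      exact ⟨mem_of_isIdempotentElem_of_mem_closure hidem hp, hsa, hidem⟩

namespace IsTrace

variable {φ : A → ℝ≥0∞}

theorem map_zero (hφ : IsTrace φ) : φ 0 = 0 := by
  simpa using hφ.smul 0 le_rfl 0

theorem mono (hφ : IsTrace φ) {a b : A} (ha : 0 ≤ a) (hab : a ≤ b) : φ a ≤ φ b := by
  rw [← add_sub_cancel a b, hφ.add a (b - a) ha (sub_nonneg.2 hab)]
  exact le_self_add

theorem map_star_add_mul_add_lt_top (hφ : IsTrace φ) {y z : A} (hy : φ (star y * y) < ∞)
    (hz : φ (star z * z) < ∞) : φ (star (y + z) * (y + z)) < ∞ := by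
  have hyy := star_mul_self_nonneg y
  have hzz := star_mul_self_nonneg z
  refine (hφ.mono (star_mul_self_nonneg _) (star_add_mul_add_le y z)).trans_lt ?_
  rw [two_nsmul, hφ.add _ _ (add_nonneg hyy hzz) (add_nonneg hyy hzz), hφ.add _ _ hyy hzz]
  finiteness

theorem map_star_mul_mul_mul_lt_top (hφ : IsTrace φ) (a : A) {y : A} (hy : φ (star y * y) < ∞) :
    φ (star (a * y) * (a * y)) < ∞ := by
  refine (hφ.mono (star_mul_self_nonneg _) (star_mul_mul_mul_le_norm_sq_smul a y)).trans_lt ?_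
  rw [← coe_nnnorm, ← NNReal.coe_pow, hφ.smul _ (star_mul_self_nonneg y)]
  finiteness

/-- The two-sided ideal `{y | φ (y* y) < ∞}` of elements that are square-integrable for the trace
`φ`, usually written `𝔑_φ`. -/
def squareIdeal (hφ : IsTrace φ) : TwoSidedIdeal A :=
  .mk' {y | φ (star y * y) < ∞} (by simp [hφ.map_zero]) hφ.map_star_add_mul_add_lt_top
    (fun hy => by simpa using hy) (hφ.map_star_mul_mul_mul_lt_top _)
    (fun {y a} hy => by
      rw [Set.mem_ofPred_eq, hφ.tracial] at hy ⊢
      simpa using hφ.map_star_mul_mul_mul_lt_top (star a) (y := star y) (by simpa using hy))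

theorem mem_squareIdeal (hφ : IsTrace φ) {y : A} : y ∈ hφ.squareIdeal ↔ φ (star y * y) < ∞ :=
  TwoSidedIdeal.mem_mk' ..

theorem mem_squareIdeal_of_nonneg (hφ : IsTrace φ) {x : A} (hx : 0 ≤ x) (hφx : φ x < ∞) :
    x ∈ hφ.squareIdeal := by
  obtain ⟨b, rfl⟩ := CStarAlgebra.nonneg_iff_eq_star_mul_self.1 hx
  exact hφ.squareIdeal.mul_mem_left _ _ (hφ.mem_squareIdeal.2 hφx)

end IsTrace

theorem trace_eq_top_of_not_mem_ideal_general (hA : IdealProperty A) {φ : A → ℝ≥0∞}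
    (hφ : IsTrace φ) {x : A} (hx : 0 ≤ x)
    (hxI : x ∉ closure
      (TwoSidedIdeal.span {e : A | IsSelfAdjoint e ∧ e * e = e ∧ φ e < ∞} : Set A)) :
    φ x = ∞ := by
  by_contra hfin
  have hxN : x ∈ hφ.squareIdeal := hφ.mem_squareIdeal_of_nonneg hx (lt_top_iff_ne_top.2 hfin)
  refine hxI (closure_mono (TwoSidedIdeal.span_mono ?_)
    (hA.subset_closure_span_projections _ hxN))
  rintro e ⟨heN, hsa, hidem⟩
  have hφe : φ (star e * e) < ∞ := hφ.mem_squareIdeal.1 heN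
  rw [hsa.star_eq, hidem] at hφe
  exact ⟨hsa, hidem, hφe⟩

end CStarAlgebra

/-- Let `A` be a C*-algebra with the ideal property and `φ` a lower semicontinuous trace
on `A`. If `I` is the closed two-sided ideal generated by the projections `e` with
`φ e < ∞`, then `φ x = ∞` for every positive `x ∉ I`. -/
theorem trace_eq_top_of_not_mem_ideal {A : Type*} [NonUnitalCStarAlgebra A] [PartialOrder A]
    [StarOrderedRing A] (hA : IdealProperty A)
    (φ : A → ℝ≥0∞) (hφ : IsTrace φ) (hφl : IsLSC φ)
    (x : A) (hx : 0 ≤ x)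
    (hxI : x ∉ closure
      (TwoSidedIdeal.span {e : A | IsSelfAdjoint e ∧ e * e = e ∧ φ e < ∞} : Set A)) :
    φ x = ∞ :=
  trace_eq_top_of_not_mem_ideal_general hA hφ hx hxI
end

section
/- Let A be a C*-algebra, let I be a closed two-sided ideal of A, and let φ be a lower semicontinuous trace on A. Define τ on A₊ by τ(x) = φ(x) if x ∈ I and τ(x) = +∞ if x ∉ I. Then τ is a lower semicontinuous trace on A. -/
open scoped ENNReal NNReal Classical

/-!
A closed two-sided ideal `I` of a C*-algebra is hereditary, and contains `x` as soon as it
contains `star x * x`; both hold because `star x * x ≤ b` forces `x` into the closure of `A * b`.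
To see this, write `b = c * c` with `c` self-adjoint. Right multiplication by the formal `1 - g`
preserves the inequality `star x * x ≤ star c * c`, so `‖x - x * g‖ ≤ ‖c - c * g‖` for every `g`,
and the functional calculus of `c` provides `g ∈ A * b` making the right-hand side arbitrarily
small. Additivity of `τ` is then heredity of `I`, its trace property is
`star x * x ∈ I ↔ x * star x ∈ I`, and its sublevel sets are those of `φ` intersected with `I`.
-/

section CStarAlgebra

variable {A : Type*} [NonUnitalCStarAlgebra A]

theorem exists_norm_sub_mul_mul_self_le {c : A} (hc : IsSelfAdjoint c) {δ : ℝ} (hδ : 0 < δ) :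
    ∃ y : A, ‖c - c * (y * (c * c))‖ ≤ δ := by
  have hpos (t : ℝ) : 0 < t ^ 4 + δ ^ 4 := by positivity
  -- `k` is close to `1 / t ^ 2` away from `0`, yet `k 0 = 0`, as the non-unital calculus requires.
  let k : ℝ → ℝ := fun t ↦ t ^ 2 / (t ^ 4 + δ ^ 4)
  have : Continuous k := by fun_prop (disch := exact fun t ↦ (hpos t).ne')
  have : k 0 = 0 := by simp [k]
  have hcfc : c - c * (cfcₙ k c * (c * c)) = cfcₙ (fun t ↦ t - t * (k t * (t * t))) c := by
    rw [cfcₙ_sub (fun t ↦ t) (fun t ↦ t * (k t * (t * t))) c,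
      cfcₙ_mul (fun t ↦ t) (fun t ↦ k t * (t * t)) c, cfcₙ_mul k (fun t ↦ t * t) c,
      cfcₙ_mul (fun t ↦ t) (fun t ↦ t) c, cfcₙ_id' ℝ c]
  refine ⟨cfcₙ k c, hcfc ▸ norm_cfcₙ_le fun t _ ↦ ?_⟩
  have hquot : t - t * (k t * (t * t)) = t * δ ^ 4 / (t ^ 4 + δ ^ 4) := by
    have := (hpos t).ne'
    simp only [k]
    field_simp
    ring
  have hnum : |t| * δ ^ 4 ≤ δ * (t ^ 4 + δ ^ 4) := by
    rcases le_total |t| δ with h | h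
    · calc |t| * δ ^ 4 ≤ δ * δ ^ 4 := by gcongr
        _ ≤ δ * (t ^ 4 + δ ^ 4) := by gcongr; exact le_add_of_nonneg_left (by positivity)
    · calc |t| * δ ^ 4 = δ * (|t| * δ ^ 3) := by ring
        _ ≤ δ * (|t| * |t| ^ 3) := by gcongr
        _ = δ * t ^ 4 := by rw [← pow_succ', Even.pow_abs ⟨2, rfl⟩]
        _ ≤ δ * (t ^ 4 + δ ^ 4) := by gcongr; exact le_add_of_nonneg_right (by positivity)
  rwa [hquot, Real.norm_eq_abs, abs_div, abs_mul, abs_of_pos (pow_pos hδ 4), abs_of_pos (hpos t),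
    div_le_iff₀ (hpos t)]

variable [PartialOrder A] [StarOrderedRing A]

theorem star_mul_self_sub_mul_le {x y : A} (h : star x * x ≤ star y * y) (g : A) :
    star (x - x * g) * (x - x * g) ≤ star (y - y * g) * (y - y * g) := by
  have expand (z : A) : star (z - z * g) * (z - z * g) =
      star z * z - star g * (star z * z) - (star z * z - star g * (star z * z)) * g := by
    rw [star_sub, star_mul]
    noncomm_ring
  obtain ⟨s, hs⟩ := CStarAlgebra.nonneg_iff_eq_star_mul_self.mp (sub_nonneg.mpr h)
  rw [← sub_nonneg]
  calc 0 ≤ star (s - s * g) * (s - s * g) := star_mul_self_nonneg _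
    _ = star (y - y * g) * (y - y * g) - star (x - x * g) * (x - x * g) := by
      rw [expand, expand, expand, ← hs]
      noncomm_ring

theorem norm_sub_mul_le_of_star_mul_self_le {x y : A} (h : star x * x ≤ star y * y) (g : A) :
    ‖x - x * g‖ ≤ ‖y - y * g‖ := by
  refine le_of_sq_le_sq ?_ (norm_nonneg _)
  rw [sq, sq, ← CStarRing.norm_star_mul_self, ← CStarRing.norm_star_mul_self]
  exact CStarAlgebra.norm_le_norm_of_nonneg_of_le (star_mul_self_nonneg _)
    (star_mul_self_sub_mul_le h g)

theorem mem_closure_range_mul_of_star_mul_self_le {x b : A} (h : star x * x ≤ b) :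
    x ∈ closure (Set.range (· * b)) := by
  obtain ⟨c, hc, rfl⟩ := CStarAlgebra.nonneg_iff_exists_isSelfAdjoint_and_eq_mul_self.mp
    ((star_mul_self_nonneg x).trans h)
  refine Metric.mem_closure_range_iff.mpr fun ε hε ↦ ?_
  obtain ⟨δ, hδ, hδε⟩ := exists_between hε
  obtain ⟨y, hy⟩ := exists_norm_sub_mul_mul_self_le hc hδ
  refine ⟨x * y, ?_⟩
  calc dist x (x * y * (c * c)) = ‖x - x * (y * (c * c))‖ := by rw [dist_eq_norm, mul_assoc x]
    _ ≤ ‖c - c * (y * (c * c))‖ :=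
      norm_sub_mul_le_of_star_mul_self_le (by rwa [hc.star_eq]) _
    _ ≤ δ := hy
    _ < ε := hδε

end CStarAlgebra

section ClosedIdeal

variable {A : Type*} [NonUnitalCStarAlgebra A] {I : TwoSidedIdeal A}

theorem mem_twoSidedIdeal_of_star_mul_self_le [PartialOrder A] [StarOrderedRing A]
    (hI : IsClosed (I : Set A)) {x b : A} (hb : b ∈ I) (h : star x * x ≤ b) : x ∈ I :=
  closure_minimal (Set.range_subset_iff.mpr fun y ↦ I.mul_mem_left y b hb) hI
    (mem_closure_range_mul_of_star_mul_self_le h)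

theorem star_mul_self_mem_twoSidedIdeal_iff (hI : IsClosed (I : Set A)) {x : A} :
    star x * x ∈ I ↔ x ∈ I := by
  let _ := CStarAlgebra.spectralOrder A
  have _ := CStarAlgebra.spectralOrderedRing A
  exact ⟨fun h ↦ mem_twoSidedIdeal_of_star_mul_self_le hI h le_rfl, I.mul_mem_left _ _⟩

theorem star_mem_twoSidedIdeal_iff (hI : IsClosed (I : Set A)) {x : A} :
    star x ∈ I ↔ x ∈ I := by
  have star_mem {y : A} (hy : y ∈ I) : star y ∈ I :=
    (star_mul_self_mem_twoSidedIdeal_iff hI).mp (by simpa using I.mul_mem_right y (star y) hy)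
  exact ⟨fun h ↦ by simpa using star_mem h, star_mem⟩

theorem mul_star_self_mem_twoSidedIdeal_iff (hI : IsClosed (I : Set A)) {x : A} :
    x * star x ∈ I ↔ x ∈ I := by
  simpa only [star_star, star_mem_twoSidedIdeal_iff hI] using
    star_mul_self_mem_twoSidedIdeal_iff hI (x := star x)

theorem smul_mem_twoSidedIdeal (hI : IsClosed (I : Set A)) {R : Type*} [SMul R A]
    [IsScalarTower R A A] [SMulCommClass R A A] (r : R) {x : A} (hx : x ∈ I) : r • x ∈ I := by
  rw [← star_mul_self_mem_twoSidedIdeal_iff hI, mul_smul_comm, ← smul_mul_assoc]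
  exact I.mul_mem_left _ _ hx

theorem smul_mem_twoSidedIdeal_iff (hI : IsClosed (I : Set A)) {G : Type*} [GroupWithZero G]
    [MulAction G A] [IsScalarTower G A A] [SMulCommClass G A A] {r : G} (hr : r ≠ 0) {x : A} :
    r • x ∈ I ↔ x ∈ I :=
  ⟨fun h ↦ by simpa only [inv_smul_smul₀ hr] using smul_mem_twoSidedIdeal hI r⁻¹ h,
    smul_mem_twoSidedIdeal hI r⟩

variable [PartialOrder A] [StarOrderedRing A]

theorem mem_twoSidedIdeal_of_nonneg_of_le (hI : IsClosed (I : Set A)) {x b : A} (hb : b ∈ I)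
    (hx : 0 ≤ x) (hxb : x ≤ b) : x ∈ I := by
  obtain ⟨s, rfl⟩ := CStarAlgebra.nonneg_iff_eq_star_mul_self.mp hx
  exact I.mul_mem_left _ _ (mem_twoSidedIdeal_of_star_mul_self_le hI hb hxb)

theorem add_mem_twoSidedIdeal_iff_of_nonneg (hI : IsClosed (I : Set A)) {x y : A}
    (hx : 0 ≤ x) (hy : 0 ≤ y) : x + y ∈ I ↔ x ∈ I ∧ y ∈ I :=
  ⟨fun h ↦ ⟨mem_twoSidedIdeal_of_nonneg_of_le hI h hx (le_add_of_nonneg_right hy),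
    mem_twoSidedIdeal_of_nonneg_of_le hI h hy (le_add_of_nonneg_left hx)⟩,
    fun h ↦ I.add_mem h.1 h.2⟩

end ClosedIdeal

/-- The function which agrees with `φ` on `s` and is `∞` off `s`: the `τ` of the theorem when `s` is
the ideal. -/
noncomputable def extendByTop {X : Type*} (s : Set X) (φ : X → ℝ≥0∞) (x : X) : ℝ≥0∞ :=
  if x ∈ s then φ x else ∞

section extendByTop

variable {X : Type*} {s : Set X} {φ : X → ℝ≥0∞} {x : X}

theorem extendByTop_of_mem (hx : x ∈ s) : extendByTop s φ x = φ x :=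
  if_pos hx

theorem extendByTop_of_notMem (hx : x ∉ s) : extendByTop s φ x = ∞ :=
  if_neg hx

theorem extendByTop_le_coe_iff {α : ℝ≥0} : extendByTop s φ x ≤ α ↔ φ x ≤ α ∧ x ∈ s := by
  by_cases hx : x ∈ s
  · simp [extendByTop_of_mem hx, hx]
  · simp [extendByTop_of_notMem hx, hx]

end extendByTop

section Trace

variable {A : Type*} [NonUnitalCStarAlgebra A] [PartialOrder A] [StarOrderedRing A] {φ : A → ℝ≥0∞}

theorem IsTrace.map_zero_s9 (hφ : IsTrace φ) : φ 0 = 0 := by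
  simpa using hφ.smul 0 le_rfl 0

theorem IsTrace.extendByTop (hφ : IsTrace φ) {I : TwoSidedIdeal A} (hI : IsClosed (I : Set A)) :
    IsTrace (extendByTop (I : Set A) φ) where
  smul x hx α := by
    obtain rfl | hα := eq_or_ne α 0
    · simp [extendByTop_of_mem I.zero_mem, hφ.map_zero_s9]
    have hmem : (α : ℝ) • x ∈ I ↔ x ∈ I := smul_mem_twoSidedIdeal_iff hI (by simpa using hα)
    by_cases h : x ∈ I
    · rw [extendByTop_of_mem h, extendByTop_of_mem (hmem.mpr h), hφ.smul x hx α]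
    · rw [extendByTop_of_notMem h, extendByTop_of_notMem (mt hmem.mp h),
        ENNReal.mul_top (by simpa using hα)]
  add x y hx hy := by
    have hmem := add_mem_twoSidedIdeal_iff_of_nonneg hI hx hy
    by_cases hxI : x ∈ I
    · by_cases hyI : y ∈ I
      · rw [extendByTop_of_mem hxI, extendByTop_of_mem hyI,
          extendByTop_of_mem (hmem.mpr ⟨hxI, hyI⟩), hφ.add x y hx hy]
      · rw [extendByTop_of_notMem hyI, extendByTop_of_notMem fun h ↦ hyI (hmem.mp h).2, add_top]
    · rw [extendByTop_of_notMem hxI, extendByTop_of_notMem fun h ↦ hxI (hmem.mp h).1, top_add]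
  tracial x := by
    by_cases h : x ∈ I
    · rw [extendByTop_of_mem ((star_mul_self_mem_twoSidedIdeal_iff hI).mpr h),
        extendByTop_of_mem ((mul_star_self_mem_twoSidedIdeal_iff hI).mpr h), hφ.tracial]
    · rw [extendByTop_of_notMem (mt (star_mul_self_mem_twoSidedIdeal_iff hI).mp h),
        extendByTop_of_notMem (mt (mul_star_self_mem_twoSidedIdeal_iff hI).mp h)]

theorem IsLSC.extendByTop (hφ : IsLSC φ) {s : Set A} (hs : IsClosed s) :
    IsLSC (extendByTop s φ) := by
  intro α
  simpa only [extendByTop_le_coe_iff, ← and_assoc, Set.ofPred_and, Set.ofPred_mem_eq] using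
    (hφ α).inter hs

end Trace

/-- Let `A` be a C*-algebra, `I` a closed two-sided ideal of `A`, and `φ` a lower
semicontinuous trace on `A`. Then `τ`, defined by `τ x = φ x` for `x ∈ I` and `τ x = ∞`
otherwise, is a lower semicontinuous trace on `A`. -/
theorem extendByTop_isTrace_isLSC {A : Type*} [NonUnitalCStarAlgebra A] [PartialOrder A]
    [StarOrderedRing A] (I : TwoSidedIdeal A) (hI : IsClosed (I : Set A))
    (φ : A → ℝ≥0∞) (hφ : IsTrace φ) (hφl : IsLSC φ) :
    IsTrace (fun x : A => if x ∈ I then φ x else ∞) ∧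
      IsLSC (fun x : A => if x ∈ I then φ x else ∞) :=
  ⟨hφ.extendByTop hI, hφl.extendByTop hI⟩
end
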